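/- Let R, K ∈ ℕ, let v₁,…,v_R ∈ ℂ satisfy v_j ≠ i for all j and v_j − v_k + 2i ≠ 0 for all 1 ≤ j < k ≤ R, and let δ₁,…,δ_K ∈ ℂ satisfy δ_j − δ_k + 2i ≠ 0 for all 1 ≤ j < k ≤ K. Fix integers x₁ < x₂ < ⋯ < x_{R+K}. Then, as Λ → +∞ along the reals, the Bethe ansatz wavefunction f_{R+K}(x₁,…,x_{R+K}; v₁,…,v_R, Λ+δ₁,…,Λ+δ_K) (which is well-defined for all sufficiently large Λ) converges to C_K · Σ_{1≤j₁<⋯<j_R≤R+K} f_R(x_{j₁},…,x_{j_R}; v₁,…,v_R), where C_K = Σ_{Q ∈ S_K} A_K(Q)[δ₁,…,δ_K] (Proposition III.2). -/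

import Mathlib

open Finset
open scoped Classical

/-- The Bethe amplitude `A_M(P)[v₁,…,v_M] = ε(P) · ∏_{j<k} (v_{Pj} − v_{Pk} + 2i)/(v_j − v_k + 2i)`. -/
noncomputable def betheAmp (M : ℕ) (v : Fin M → ℂ) (P : Equiv.Perm (Fin M)) : ℂ :=
  (Equiv.Perm.sign P : ℤ) *
    ∏ jk ∈ univ.filter (fun jk : Fin M × Fin M => jk.1 < jk.2),
      (v (P jk.1) - v (P jk.2) + 2 * Complex.I) / (v jk.1 - v jk.2 + 2 * Complex.I)

/-- The Bethe ansatz wavefunction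
`f_M(x₁,…,x_M; v₁,…,v_M) = Σ_{P ∈ S_M} A_M(P)[v] · ∏_j ((v_{Pj}+i)/(v_{Pj}−i))^{x_j}`
at integer coordinates. -/
noncomputable def betheWF (M : ℕ) (v : Fin M → ℂ) (x : Fin M → ℤ) : ℂ :=
  ∑ P : Equiv.Perm (Fin M), betheAmp M v P *
    ∏ j : Fin M, ((v (P j) + Complex.I) / (v (P j) - Complex.I)) ^ (x j)

/-!
Written as a sum over the inverse permutation `q`, the amplitude is a product over the inversions of
`q` of two-body factors `S(v_a, v_b)`. These depend only on differences of rapidities and tend to `1`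
when one argument goes to infinity, as do the momentum factors, so in the limit the term of `q`
splits into one factor depending on the positions `q` assigns to the finite rapidities and one
depending only on the relative order of the positions of the infinite ones. A permutation of
`R + K` positions is a choice of `R` of them together with a permutation of each of the two blocks,
and with this parametrization the limiting sum factorizes.
-/

open Filter Topology Bornology

/-- The two-body factor acquired by the Bethe amplitude when the rapidities `x` and `y` are
exchanged; the sign is that of the transposition. -/
noncomputable def scatteringFactor (x y : ℂ) : ℂ :=
  -((y - x + 2 * Complex.I) / (x - y + 2 * Complex.I))

/-- The one-particle factor `e(v) = (v + i) / (v - i)`. -/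
noncomputable def momentumFactor (v : ℂ) : ℂ :=
  (v + Complex.I) / (v - Complex.I)

/-- The Bethe amplitude as a function of the positions `q a` of the rapidities `v a`: the product of
the two-body factors over the inversions of `q`. The positions range over any ordered type, so that
the definition also applies to the restriction of a permutation to a block of rapidities. -/
noncomputable def scatteringProd {ι α : Type*} [Fintype ι] [LT ι] [LT α]
    (v : ι → ℂ) (q : ι → α) : ℂ :=
  ∏ a, ∏ b, if a < b ∧ q b < q a then scatteringFactor (v a) (v b) else 1

/-- The term of the Bethe wavefunction in which the rapidity `v a` sits at the coordinate
`x (q a)`. -/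
noncomputable def betheTerm {ι α : Type*} [Fintype ι] [LT ι] [LT α]
    (v : ι → ℂ) (x : α → ℤ) (q : ι → α) : ℂ :=
  scatteringProd v q * ∏ a, momentumFactor (v a) ^ x (q a)

section OrderEmbedding

variable {ι α β : Type*} [Fintype ι] [LT ι] [Preorder α] [Preorder β]

lemma scatteringProd_orderEmbedding_comp (v : ι → ℂ) (t : α ↪o β) (q : ι → α) :
    scatteringProd v (t ∘ q) = scatteringProd v q := by
  simp only [scatteringProd, Function.comp_apply, t.lt_iff_lt]

lemma betheTerm_comp_orderEmbedding (v : ι → ℂ) (x : β → ℤ) (t : α ↪o β) (q : ι → α) :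
    betheTerm v (x ∘ t) q = betheTerm v x (t ∘ q) := by
  simp only [betheTerm, scatteringProd_orderEmbedding_comp, Function.comp_apply]

end OrderEmbedding

section Amplitude

variable {M : ℕ} {v : Fin M → ℂ}

lemma prod_filter_fst_lt_snd {ι N : Type*} [Fintype ι] [Preorder ι] [LocallyFiniteOrderTop ι]
    [CommMonoid N] [DecidablePred fun p : ι × ι => p.1 < p.2] (f : ι → ι → N) :
    ∏ p ∈ univ.filter (fun p : ι × ι => p.1 < p.2), f p.1 p.2 = ∏ a, ∏ b ∈ Ioi a, f a b := by
  simp only [prod_filter, Fintype.prod_prod_type, ← filter_lt_eq_Ioi]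

/-- Unlike `Equiv.Perm.prod_Ioi_comp_eq_sign_mul_prod`, this does not assume `g` antisymmetric. -/
lemma sign_mul_prod_Ioi_comp {A : Type*} [CommRing A] (P : Equiv.Perm (Fin M))
    (g : Fin M → Fin M → A) :
    (P.sign : A) * ∏ a, ∏ b ∈ Ioi a, g (P a) (P b) =
      ∏ a, ∏ b ∈ Ioi a, if P.symm b < P.symm a then -g b a else g a b := by
  -- The antisymmetric function that agrees with `g (P a) (P b)` at `(P a, P b)` for `a < b`.
  let f (a b : Fin M) : A :=
    if P.symm a < P.symm b then g a b else if P.symm b < P.symm a then -g b a else 0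
  have f_antisymm (a b : Fin M) : f a b = -f b a := by
    rcases lt_trichotomy (P.symm a) (P.symm b) with h | h | h <;> simp [f, h, h.not_gt]
  have f_comp : ∏ a, ∏ b ∈ Ioi a, f (P a) (P b) = ∏ a, ∏ b ∈ Ioi a, g (P a) (P b) :=
    prod_congr rfl fun a _ => prod_congr rfl fun b hb => by simp [f, mem_Ioi.1 hb]
  have sign_sq : (P.sign : A) * P.sign = 1 := by
    rw [← Int.cast_mul, Int.units_coe_mul_self, Int.cast_one]
  rw [← f_comp, P.prod_Ioi_comp_eq_sign_mul_prod f_antisymm, ← mul_assoc, sign_sq, one_mul]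
  refine prod_congr rfl fun a _ => prod_congr rfl fun b hb => ?_
  have hab : P.symm a ≠ P.symm b := P.symm.injective.ne (mem_Ioi.1 hb).ne
  rcases hab.lt_or_gt with h | h <;> simp [f, h, h.not_gt]

lemma scatteringProd_eq_prod_Ioi {ι α : Type*} [Fintype ι] [Preorder ι] [LocallyFiniteOrderTop ι]
    [LT α] (v : ι → ℂ) (q : ι → α) :
    scatteringProd v q =
      ∏ a, ∏ b ∈ Ioi a, if q b < q a then scatteringFactor (v a) (v b) else 1 := by
  simp only [scatteringProd, ← filter_lt_eq_Ioi, prod_filter, ite_and]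

lemma betheAmp_symm (hv : ∀ j k : Fin M, j < k → v j - v k + 2 * Complex.I ≠ 0)
    (q : Equiv.Perm (Fin M)) : betheAmp M v q.symm = scatteringProd v q := by
  rw [betheAmp, prod_filter_fst_lt_snd (fun j k =>
    (v (q.symm j) - v (q.symm k) + 2 * Complex.I) / (v j - v k + 2 * Complex.I))]
  simp only [prod_div_distrib]
  rw [← mul_div_assoc, sign_mul_prod_Ioi_comp q.symm (fun a b => v a - v b + 2 * Complex.I),
    Equiv.symm_symm, scatteringProd_eq_prod_Ioi]
  simp only [← prod_div_distrib]
  refine prod_congr rfl fun a _ => prod_congr rfl fun b hb => ?_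
  split_ifs
  · rw [scatteringFactor, neg_div]
  · exact div_self (hv a b (mem_Ioi.1 hb))

lemma sum_betheAmp (hv : ∀ j k : Fin M, j < k → v j - v k + 2 * Complex.I ≠ 0) :
    ∑ P : Equiv.Perm (Fin M), betheAmp M v P =
      ∑ q : Equiv.Perm (Fin M), scatteringProd v q := by
  rw [← Equiv.symm_bijective.sum_comp]
  exact sum_congr rfl fun q _ => betheAmp_symm hv q

lemma betheWF_eq_sum_betheTerm (hv : ∀ j k : Fin M, j < k → v j - v k + 2 * Complex.I ≠ 0)
    (x : Fin M → ℤ) : betheWF M v x = ∑ q : Equiv.Perm (Fin M), betheTerm v x q := by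
  rw [betheWF, ← Equiv.symm_bijective.sum_comp]
  refine sum_congr rfl fun q _ => ?_
  rw [betheAmp_symm hv, betheTerm, ← Equiv.prod_comp q]
  simp only [momentumFactor, Equiv.symm_apply_apply]

end Amplitude

section Limits

lemma tendsto_add_div_add_cobounded {𝕜 : Type*} [NormedField 𝕜] (a b : 𝕜) :
    Tendsto (fun z => (z + a) / (z + b)) (cobounded 𝕜) (𝓝 1) := by
  have hlim : Tendsto (fun z => 1 + (a - b) * (z + b)⁻¹) (cobounded 𝕜) (𝓝 1) := by
    simpa using ((tendsto_inv₀_cobounded.comp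
      (tendsto_add_const_cobounded b)).const_mul (a - b)).const_add 1
  refine hlim.congr' ?_
  filter_upwards [eventually_ne_cobounded (-b)] with z hz
  have hzb : z + b ≠ 0 := fun h => hz (eq_neg_of_add_eq_zero_left h)
  field_simp
  ring

lemma scatteringFactor_add_left (z x y : ℂ) :
    scatteringFactor (z + x) (z + y) = scatteringFactor x y := by
  simp [scatteringFactor]

lemma scatteringProd_add_left {ι α : Type*} [Fintype ι] [LT ι] [LT α] (z : ℂ) (δ : ι → ℂ)
    (q : ι → α) : scatteringProd (fun j => z + δ j) q = scatteringProd δ q := by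
  simp only [scatteringProd, scatteringFactor_add_left]

lemma tendsto_scatteringFactor_right (x y : ℂ) :
    Tendsto (fun z => scatteringFactor x (z + y)) (cobounded ℂ) (𝓝 1) := by
  refine (tendsto_add_div_add_cobounded (y - x + 2 * Complex.I) (y - x - 2 * Complex.I)).congr
    fun z => ?_
  rw [scatteringFactor, ← div_neg]
  congr 1 <;> ring

lemma tendsto_momentumFactor_zpow (y : ℂ) (n : ℤ) :
    Tendsto (fun z => momentumFactor (z + y) ^ n) (cobounded ℂ) (𝓝 1) := by
  simpa [momentumFactor, add_assoc, add_sub_assoc] using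
    (tendsto_add_div_add_cobounded (y + Complex.I) (y - Complex.I)).zpow₀ n (Or.inl one_ne_zero)

variable {R K : ℕ}

lemma scatteringProd_append {α : Type*} [LT α] (v : Fin R → ℂ) (w : Fin K → ℂ)
    (q : Fin (R + K) → α) :
    scatteringProd (Fin.append v w) q =
      scatteringProd v (q ∘ Fin.castAdd K) *
        ((∏ a, ∏ b, if q (Fin.natAdd R b) < q (Fin.castAdd K a) then
          scatteringFactor (v a) (w b) else 1) * scatteringProd w (q ∘ Fin.natAdd R)) := by
  have castAdd_lt_castAdd (a b : Fin R) : Fin.castAdd K a < Fin.castAdd K b ↔ a < b := Iff.rfl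
  have castAdd_lt_natAdd (a : Fin R) (b : Fin K) : Fin.castAdd K a < Fin.natAdd R b := by
    simp only [Fin.lt_def, Fin.val_castAdd, Fin.val_natAdd]
    lia
  simp only [scatteringProd, Fin.prod_univ_add, Fin.append_left, Fin.append_right,
    castAdd_lt_castAdd, Fin.natAdd_lt_natAdd_iff, castAdd_lt_natAdd, (castAdd_lt_natAdd _ _).not_gt,
    Function.comp_apply, true_and, false_and, if_false, prod_const_one, mul_one, prod_mul_distrib]
  congr!

lemma tendsto_scatteringProd_append {α : Type*} [LT α] (v : Fin R → ℂ) (δ : Fin K → ℂ)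
    (q : Fin (R + K) → α) :
    Tendsto (fun z => scatteringProd (Fin.append v (fun j => z + δ j)) q) (cobounded ℂ)
      (𝓝 (scatteringProd v (q ∘ Fin.castAdd K) * scatteringProd δ (q ∘ Fin.natAdd R))) := by
  have cross_factors : Tendsto (fun z => ∏ a, ∏ b,
      if q (Fin.natAdd R b) < q (Fin.castAdd K a) then scatteringFactor (v a) (z + δ b) else 1)
      (cobounded ℂ) (𝓝 (∏ _a : Fin R, ∏ _b : Fin K, 1)) := by
    refine tendsto_finsetProd _ fun a _ => tendsto_finsetProd _ fun b _ => ?_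
    split_ifs
    · exact tendsto_scatteringFactor_right (v a) (δ b)
    · exact tendsto_const_nhds
  simp only [scatteringProd_append, scatteringProd_add_left]
  simpa only [prod_const_one, one_mul] using (cross_factors.mul_const
    (scatteringProd δ (q ∘ Fin.natAdd R))).const_mul (scatteringProd v (q ∘ Fin.castAdd K))

lemma tendsto_betheTerm_append {α : Type*} [LT α] (v : Fin R → ℂ) (δ : Fin K → ℂ) (x : α → ℤ)
    (q : Fin (R + K) → α) :
    Tendsto (fun z => betheTerm (Fin.append v (fun j => z + δ j)) x q) (cobounded ℂ)
      (𝓝 (betheTerm v x (q ∘ Fin.castAdd K) * scatteringProd δ (q ∘ Fin.natAdd R))) := by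
  have momentum_factors : Tendsto
      (fun z => ∏ a, momentumFactor (Fin.append v (fun j => z + δ j) a) ^ x (q a)) (cobounded ℂ)
      (𝓝 (∏ a, momentumFactor (v a) ^ x (q (Fin.castAdd K a)))) := by
    simp only [Fin.prod_univ_add, Fin.append_left, Fin.append_right]
    simpa only [prod_const_one, mul_one] using
      (tendsto_finsetProd univ fun b _ => tendsto_momentumFactor_zpow (δ b)
        (x (q (Fin.natAdd R b)))).const_mul (∏ a, momentumFactor (v a) ^ x (q (Fin.castAdd K a)))
  rw [betheTerm, mul_right_comm]
  exact (tendsto_scatteringProd_append v δ q).mul momentum_factors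

lemma eventually_append_sub_append_ne_zero {v : Fin R → ℂ} {δ : Fin K → ℂ} {c : ℂ}
    (hv : ∀ j k : Fin R, j < k → v j - v k + c ≠ 0)
    (hδ : ∀ j k : Fin K, j < k → δ j - δ k + c ≠ 0) :
    ∀ᶠ z in cobounded ℂ, ∀ j k : Fin (R + K), j < k →
      Fin.append v (fun j => z + δ j) j - Fin.append v (fun j => z + δ j) k + c ≠ 0 := by
  have cross_ne_zero : ∀ᶠ z in cobounded ℂ, ∀ (a : Fin R) (b : Fin K), z ≠ v a - δ b + c :=
    eventually_all.2 fun a => eventually_all.2 fun b => eventually_ne_cobounded _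
  filter_upwards [cross_ne_zero] with z hz j k
  cases j using Fin.addCases <;> cases k using Fin.addCases <;> intro hjk <;>
    simp only [Fin.append_left, Fin.append_right, add_sub_add_left_eq_sub]
  case left.left a b => exact hv a b hjk
  case left.right a b => exact fun h => hz a b (by linear_combination -h)
  case right.left a b =>
    simp only [Fin.lt_def, Fin.val_castAdd, Fin.val_natAdd] at hjk
    lia
  case right.right a b => exact hδ a b ((Fin.natAdd_lt_natAdd_iff R).1 hjk)

end Limits

section Shuffle

variable {R K : ℕ} {α : Type*} [Fintype α] [LinearOrder α]

lemma card_compl_map_orderEmbedding (h : Fintype.card α = R + K) (s : Fin R ↪o α) :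
    #(univ.map s.toEmbedding)ᶜ = K := by
  simp [card_compl, h]

/-- The increasing enumeration of the complement of the range of `s`. -/
noncomputable def complEmb (h : Fintype.card α = R + K) (s : Fin R ↪o α) : Fin K ↪o α :=
  (univ.map s.toEmbedding)ᶜ.orderEmbOfFin (card_compl_map_orderEmbedding h s)

/-- The bijection `Fin R ⊕ Fin K ≃ α` that is `s` on the first block and increasing on the second
(the inverse of a shuffle). -/
noncomputable def shuffleEquiv (h : Fintype.card α = R + K) (s : Fin R ↪o α) :
    Fin R ⊕ Fin K ≃ α :=
  finSumEquivOfFinset (s := univ.map s.toEmbedding) (by simp) (card_compl_map_orderEmbedding h s)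

lemma shuffleEquiv_inl (h : Fintype.card α = R + K) (s : Fin R ↪o α) (a : Fin R) :
    shuffleEquiv h s (Sum.inl a) = s a := by
  rw [shuffleEquiv, finSumEquivOfFinset_inl, ← orderEmbOfFin_unique' _ (f := s) (by simp)]

lemma shuffleEquiv_inr (h : Fintype.card α = R + K) (s : Fin R ↪o α) (b : Fin K) :
    shuffleEquiv h s (Sum.inr b) = complEmb h s b :=
  rfl

/-- The bijection `Fin R ⊕ Fin K ≃ α` obtained by choosing the image of the first block and
permuting each block. -/
noncomputable def shuffle (h : Fintype.card α = R + K)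
    (p : (Fin R ↪o α) × Equiv.Perm (Fin R) × Equiv.Perm (Fin K)) : Fin R ⊕ Fin K ≃ α :=
  (p.2.1.sumCongr p.2.2).trans (shuffleEquiv h p.1)

lemma shuffle_comp_inl (h : Fintype.card α = R + K) (s : Fin R ↪o α) (σ : Equiv.Perm (Fin R))
    (τ : Equiv.Perm (Fin K)) : shuffle h (s, σ, τ) ∘ Sum.inl = s ∘ σ :=
  funext fun a => shuffleEquiv_inl h s (σ a)

lemma shuffle_comp_inr (h : Fintype.card α = R + K) (s : Fin R ↪o α) (σ : Equiv.Perm (Fin R))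
    (τ : Equiv.Perm (Fin K)) : shuffle h (s, σ, τ) ∘ Sum.inr = complEmb h s ∘ τ :=
  rfl

lemma shuffle_injective (h : Fintype.card α = R + K) : Function.Injective (shuffle h) := by
  rintro ⟨s, σ, τ⟩ ⟨s', σ', τ'⟩ heq
  obtain rfl : s = s' := by
    have hcomp : s ∘ σ = s' ∘ σ' := by rw [← shuffle_comp_inl h s σ τ, heq, shuffle_comp_inl]
    rw [← OrderEmbedding.range_inj, ← σ.surjective.range_comp s, hcomp, σ'.surjective.range_comp]
  have hblocks : σ.sumCongr τ = σ'.sumCongr τ' :=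
    Equiv.ext fun i => (shuffleEquiv h s).injective (Equiv.congr_fun heq i)
  rw [Equiv.Perm.sumCongrHom_injective (a₁ := (σ, τ)) (a₂ := (σ', τ')) hblocks]

lemma shuffle_surjective (h : Fintype.card α = R + K) : Function.Surjective (shuffle h) := by
  intro e
  obtain ⟨s, hs⟩ : ∃ s : Fin R ↪o α, Set.range s = Set.range (e ∘ Sum.inl) := by
    have hcard : #(univ.image (e ∘ Sum.inl)) = R := by
      rw [card_image_of_injective _ (e.injective.comp Sum.inl_injective), card_fin]
    exact ⟨(univ.image (e ∘ Sum.inl)).orderEmbOfFin hcard, by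
      rw [range_orderEmbOfFin, coe_image, coe_univ, Set.image_univ]⟩
  let r : Equiv.Perm (Fin R ⊕ Fin K) := e.trans (shuffleEquiv h s).symm
  have r_mapsTo : Set.MapsTo r (Set.range Sum.inl) (Set.range Sum.inl) := by
    rintro _ ⟨a, rfl⟩
    obtain ⟨b, hb⟩ : e (Sum.inl a) ∈ Set.range s := hs ▸ ⟨a, rfl⟩
    exact ⟨b, by rw [Equiv.trans_apply, ← hb, ← shuffleEquiv_inl h, Equiv.symm_apply_apply]⟩
  obtain ⟨⟨σ, τ⟩, hστ⟩ := Equiv.Perm.mem_sumCongrHom_range_of_perm_mapsTo_inl r_mapsTo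
  replace hστ : σ.sumCongr τ = r := hστ
  refine ⟨(s, σ, τ), Equiv.ext fun i => ?_⟩
  simp [shuffle, hστ, r]

lemma sum_equiv_mul_eq_sum_orderEmbedding {A : Type*} [CommSemiring A]
    (h : Fintype.card α = R + K) (F : (Fin R → α) → A) (G : (Fin K → α) → A) :
    ∑ e : Fin R ⊕ Fin K ≃ α, F (e ∘ Sum.inl) * G (e ∘ Sum.inr) =
      ∑ s : Fin R ↪o α, (∑ σ : Equiv.Perm (Fin R), F (s ∘ σ)) *
        ∑ τ : Equiv.Perm (Fin K), G (complEmb h s ∘ τ) := by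
  rw [← Function.Bijective.sum_comp ⟨shuffle_injective h, shuffle_surjective h⟩]
  simp only [Fintype.sum_prod_type, shuffle_comp_inl, shuffle_comp_inr,
    sum_mul_sum]

lemma sum_filter_strictMono {ι β N : Type*} [LinearOrder ι] [Preorder β]
    [Fintype (ι → β)] [Fintype (ι ↪o β)] [DecidablePred (StrictMono : (ι → β) → Prop)]
    [AddCommMonoid N] (f : (ι → β) → N) :
    ∑ s ∈ univ.filter (fun s : ι → β => StrictMono s), f s = ∑ s : ι ↪o β, f s := by
  refine (sum_nbij (fun s : ι ↪o β => ⇑s) (fun s _ => ?_) DFunLike.coe_injective.injOn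
    (fun s hs => ?_) fun _ _ => rfl).symm
  · exact mem_filter.2 ⟨mem_univ _, s.strictMono⟩
  · exact ⟨OrderEmbedding.ofStrictMono s (mem_filter.1 hs).2, mem_coe.2 (mem_univ _), rfl⟩

end Shuffle

lemma sum_perm_betheTerm_mul_scatteringProd {R K : ℕ} {v : Fin R → ℂ} {δ : Fin K → ℂ}
    (hv : ∀ j k : Fin R, j < k → v j - v k + 2 * Complex.I ≠ 0)
    (hδ : ∀ j k : Fin K, j < k → δ j - δ k + 2 * Complex.I ≠ 0) (x : Fin (R + K) → ℤ) :
    ∑ q : Equiv.Perm (Fin (R + K)),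
        betheTerm v x (q ∘ Fin.castAdd K) * scatteringProd δ (q ∘ Fin.natAdd R) =
      (∑ Q : Equiv.Perm (Fin K), betheAmp K δ Q) *
        ∑ s : Fin R ↪o Fin (R + K), betheWF R v (x ∘ s) := by
  calc
    _ = ∑ e : Fin R ⊕ Fin K ≃ Fin (R + K),
          betheTerm v x (e ∘ Sum.inl) * scatteringProd δ (e ∘ Sum.inr) :=
      (Equiv.sum_comp (finSumFinEquiv.equivCongr (Equiv.refl (Fin (R + K)))).symm
        fun e => betheTerm v x (e ∘ Sum.inl) * scatteringProd δ (e ∘ Sum.inr))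
    _ = ∑ s : Fin R ↪o Fin (R + K), (∑ σ : Equiv.Perm (Fin R), betheTerm v x (s ∘ σ)) *
          ∑ τ : Equiv.Perm (Fin K),
            scatteringProd δ (complEmb (Fintype.card_fin (R + K)) s ∘ τ) :=
      sum_equiv_mul_eq_sum_orderEmbedding _ _ _
    _ = ∑ s : Fin R ↪o Fin (R + K), betheWF R v (x ∘ s) * ∑ Q, betheAmp K δ Q := by
      simp only [betheWF_eq_sum_betheTerm hv, sum_betheAmp hδ, betheTerm_comp_orderEmbedding,
        scatteringProd_orderEmbedding_comp]
    _ = _ := by rw [← sum_mul, mul_comm]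

theorem prop_III_2_general (R K : ℕ) (v : Fin R → ℂ) (δ : Fin K → ℂ)
    (_hvI : ∀ j, v j ≠ Complex.I)
    (hv : ∀ j k : Fin R, j < k → v j - v k + 2 * Complex.I ≠ 0)
    (hδ : ∀ j k : Fin K, j < k → δ j - δ k + 2 * Complex.I ≠ 0)
    (x : Fin (R + K) → ℤ) :
    Tendsto (fun z : ℂ => betheWF (R + K) (Fin.append v (fun j => z + δ j)) x) (cobounded ℂ)
      (𝓝 ((∑ Q : Equiv.Perm (Fin K), betheAmp K δ Q) *
        ∑ s ∈ univ.filter (fun s : Fin R → Fin (R + K) => StrictMono s), betheWF R v (x ∘ s))) := by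
  rw [sum_filter_strictMono (fun s => betheWF R v (x ∘ s)),
    ← sum_perm_betheTerm_mul_scatteringProd hv hδ]
  refine (tendsto_finsetSum (univ : Finset (Equiv.Perm (Fin (R + K)))) fun q _ =>
    tendsto_betheTerm_append v δ x q).congr' ?_
  filter_upwards [eventually_append_sub_append_ne_zero hv hδ] with z hz
  exact (betheWF_eq_sum_betheTerm hz x).symm

/-- Proposition III.2: as `Λ → +∞` along the reals, the Bethe ansatz wavefunction with
rapidities `v₁,…,v_R, Λ+δ₁,…,Λ+δ_K` at fixed increasing integer coordinates
`x₁ < ⋯ < x_{R+K}` converges to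
`C_K · Σ_{j₁<⋯<j_R} f_R(x_{j₁},…,x_{j_R}; v₁,…,v_R)` with
`C_K = Σ_{Q ∈ S_K} A_K(Q)[δ₁,…,δ_K]`. -/
theorem prop_III_2 (R K : ℕ)
    (v : Fin R → ℂ) (δ : Fin K → ℂ)
    (hvI : ∀ j, v j ≠ Complex.I)
    (hv : ∀ j k : Fin R, j < k → v j - v k + 2 * Complex.I ≠ 0)
    (hδ : ∀ j k : Fin K, j < k → δ j - δ k + 2 * Complex.I ≠ 0)
    (x : Fin (R + K) → ℤ) (hx : StrictMono x) :
    Filter.Tendsto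
      (fun Λ : ℝ => betheWF (R + K)
        (Fin.addCases (motive := fun _ => ℂ) v (fun j => (Λ : ℂ) + δ j)) x)
      Filter.atTop
      (nhds ((∑ Q : Equiv.Perm (Fin K), betheAmp K δ Q) *
        ∑ s ∈ univ.filter (fun s : Fin R → Fin (R + K) => StrictMono s),
          betheWF R v (fun m => x (s m)))) := by
  exact (prop_III_2_general R K v δ hvI hv hδ x).comp (RCLike.tendsto_ofReal_atTop_cobounded ℂ)
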